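/- Let m = 2^k + q with k ≥ 0 and 0 ≤ q < 2^k, and let r(m) be the number of allowed m-words u with freq(u) = 2/(3·2^k). Then r(m) = 1 if k = 0; r(m) = 3·2^{k−1} − 2q if k ≥ 1 and q < 2^{k−1}; and r(m) = 2^k − q if k ≥ 1 and q ≥ 2^{k−1}. -/

import Mathlib

/-!
The argument is a desubstitution. Since `pd (2j-1) = 0` and `pd (2j) = 1 - pd j`, a word of
length `L` starting at `2j` is coded by the word of length `⌈L/2⌉` at `j` (`blowEven`), and one
starting at `2j-1` by the word of length `⌊L/2⌋` at `j` (`blowOdd`). Once `L ≥ 3` the parity of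
the starting position can be read off the word, because of two consecutive even positions one is
`≡ 2 mod 4` and carries the letter `1`, whereas odd positions carry `0`. Hence the two codings are
injective with disjoint images and halve frequencies, so the number `r(c, L)` of allowed
`L`-words of frequency `c` satisfies `r(c/2, L) = r(c, ⌈L/2⌉) + r(c, ⌊L/2⌋)`
(`encard_freqSet_half`).

The seeds are the lengths `1` and `2`. The number `N(n)` of letters `1` among the first `n` obeys
`N(n) = ⌊n/2⌋ - N(⌊n/2⌋)`, so `3 N(n) - n = O(log n)` and the letters `0`, `1` have frequencies
`2/3`, `1/3`; it follows that `00`, `01`, `10` each have frequency `1/3`. The count for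
`2^k + q`, with `q = 2^k` included so that the recursion closes up, is then an induction on `k`.
-/

open Filter Topology

/-- The period-doubling sequence (1-based): `pd i = k_i mod 2` where `k_i` is the
largest `k` such that `2^k` divides `i`. -/
def pd (i : ℕ) : ℕ := padicValNat 2 i % 2

/-- The `m`-word `w_i^(m) = ω_i ω_{i+1} ⋯ ω_{i+m-1}` of the period-doubling sequence. -/
def wordAt (i m : ℕ) : List ℕ := (List.range m).map (fun h => pd (i + h))

/-- An `m`-word is allowed if it occurs in the period-doubling sequence. -/
def Allowed (m : ℕ) (v : List ℕ) : Prop := ∃ i, 1 ≤ i ∧ wordAt i m = v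

/-- The complexity function of the period-doubling sequence. -/
noncomputable def pdComplexity (m : ℕ) : ℕ := Set.ncard {v | Allowed m v}

/-- `HasFreq m v c`: the frequency of the `m`-word `v` in the period-doubling
sequence exists and equals `c`. -/
def HasFreq (m : ℕ) (v : List ℕ) (c : ℝ) : Prop :=
  Tendsto (fun n : ℕ => (((Finset.Icc 1 n).filter (fun i => wordAt i m = v)).card : ℝ) / n)
    atTop (𝓝 c)

open Classical in
/-- The correlation sum `C(ω, n, m)` of the period-doubling sequence, for a distance
threshold `ε` with `2^{-m} ≤ ε < 2^{-m+1}`. -/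
noncomputable def corrSum (n m : ℕ) : ℝ :=
  (((Finset.range n ×ˢ Finset.range n).filter
      (fun p : ℕ × ℕ => ∀ h ∈ Finset.Icc 1 m, pd (p.1 + h) = pd (p.2 + h))).card : ℝ) / (n : ℝ) ^ 2

/-- The period-doubling substitution `ζ(0) = 01`, `ζ(1) = 00`, extended to a morphism
on finite words. -/
def substWord (w : List ℕ) : List ℕ := (w.map (fun a => if a = 0 then [0, 1] else [0, 0])).flatten

/-- The period-doubling substitution acting on one-sided infinite sequences
(0-based indexing). -/
def substSeq (x : ℕ → ℕ) : ℕ → ℕ := fun n =>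
  if n % 2 = 0 then 0 else if x (n / 2) = 0 then 1 else 0

/-! ### The sequence and its words -/

lemma pd_le_one (i : ℕ) : pd i ≤ 1 := by unfold pd; omega

lemma pd_odd (j : ℕ) : pd (2 * j + 1) = 0 := by
  have : padicValNat 2 (2 * j + 1) = 0 := padicValNat.eq_zero_of_not_dvd (by omega)
  simp [pd, this]

lemma pd_even (j : ℕ) (hj : 1 ≤ j) : pd (2 * j) = 1 - pd j := by
  have : padicValNat 2 (2 * j) = 1 + padicValNat 2 j := by
    rw [padicValNat.mul (by norm_num) (by omega), padicValNat.self (by norm_num)]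
  unfold pd
  omega

lemma wordAt_eq_iff (i i' m : ℕ) :
    wordAt i m = wordAt i' m ↔ ∀ h < m, pd (i + h) = pd (i' + h) := by
  simp [wordAt]

lemma wordAt_getD (i m h : ℕ) (hh : h < m) : (wordAt i m).getD h 0 = pd (i + h) := by
  simp [wordAt, hh]

/-- The word of length `L` at an even position `2j`, computed from the word at `j`. -/
def blowEven (L : ℕ) (v : List ℕ) : List ℕ :=
  (List.range L).map (fun h => if h % 2 = 0 then 1 - v.getD (h / 2) 0 else 0)

/-- The word of length `L` at an odd position `2j-1`, computed from the word at `j`. -/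
def blowOdd (L : ℕ) (v : List ℕ) : List ℕ :=
  (List.range L).map (fun h => if h % 2 = 0 then 0 else 1 - v.getD (h / 2) 0)

lemma wordAt_even (j L : ℕ) (hj : 1 ≤ j) :
    wordAt (2 * j) L = blowEven L (wordAt j ((L + 1) / 2)) := by
  unfold blowEven
  rw [wordAt]
  apply List.map_congr_left
  intro h hh
  rw [List.mem_range] at hh
  rw [wordAt_getD _ _ _ (by omega)]
  split_ifs with h2
  · rw [← pd_even _ (by omega)]; congr 1; omega
  · rw [← pd_odd (j + h / 2)]; congr 1; omega

lemma wordAt_odd (j L : ℕ) (hj : 1 ≤ j) :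
    wordAt (2 * j - 1) L = blowOdd L (wordAt j (L / 2)) := by
  unfold blowOdd
  rw [wordAt]
  apply List.map_congr_left
  intro h hh
  rw [List.mem_range] at hh
  split_ifs with h2
  · rw [← pd_odd (j - 1 + h / 2)]; congr 1; omega
  · rw [wordAt_getD _ _ _ (by omega), ← pd_even _ (by omega)]; congr 1; omega

lemma wordAt_even_inj (i j L : ℕ) (hi : 1 ≤ i) (hj : 1 ≤ j) :
    wordAt (2 * i) L = wordAt (2 * j) L ↔ wordAt i ((L + 1) / 2) = wordAt j ((L + 1) / 2) := by
  constructor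
  · rw [wordAt_eq_iff, wordAt_eq_iff]
    intro H h hh
    have := H (2 * h) (by omega)
    rw [← mul_add, ← mul_add, pd_even _ (by omega), pd_even _ (by omega)] at this
    have := pd_le_one (i + h)
    have := pd_le_one (j + h)
    omega
  · intro H
    rw [wordAt_even i L hi, wordAt_even j L hj, H]

lemma wordAt_odd_inj (i j L : ℕ) (hi : 1 ≤ i) (hj : 1 ≤ j) :
    wordAt (2 * i - 1) L = wordAt (2 * j - 1) L ↔ wordAt i (L / 2) = wordAt j (L / 2) := by
  constructor
  · rw [wordAt_eq_iff, wordAt_eq_iff]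
    intro H h hh
    have := H (2 * h + 1) (by omega)
    rw [show 2 * i - 1 + (2 * h + 1) = 2 * (i + h) by omega,
      show 2 * j - 1 + (2 * h + 1) = 2 * (j + h) by omega,
      pd_even _ (by omega), pd_even _ (by omega)] at this
    have := pd_le_one (i + h)
    have := pd_le_one (j + h)
    omega
  · intro H
    rw [wordAt_odd i L hi, wordAt_odd j L hj, H]

lemma wordAt_even_ne_odd (i j L : ℕ) (hL : 3 ≤ L) (hi : 1 ≤ i) (hj : 1 ≤ j) :
    wordAt (2 * i) L ≠ wordAt (2 * j - 1) L := by
  rw [Ne, wordAt_eq_iff]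
  intro H
  -- One of the even positions `2i`, `2i+2` is `≡ 2 mod 4`.
  rcases Nat.even_or_odd' i with ⟨t, rfl | rfl⟩
  · have := H 2 (by omega)
    rw [show 2 * (2 * t) + 2 = 2 * (2 * t + 1) by ring, pd_even _ (by omega), pd_odd,
      show 2 * j - 1 + 2 = 2 * j + 1 by omega, pd_odd] at this
    omega
  · have := H 0 (by omega)
    rw [show 2 * (2 * t + 1) + 0 = 2 * (2 * t + 1) by ring, pd_even _ (by omega), pd_odd,
      show 2 * j - 1 + 0 = 2 * (j - 1) + 1 by omega, pd_odd] at this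
    omega

/-! ### Densities of sets of positions -/

open Classical in
/-- Number of positions `1 ≤ i ≤ n` satisfying `P`. -/
noncomputable def cnt (P : ℕ → Prop) (n : ℕ) : ℕ := ((Finset.Icc 1 n).filter P).card

/-- The set of positions satisfying `P` has natural density `c`. -/
def Dens (P : ℕ → Prop) (c : ℝ) : Prop :=
  Tendsto (fun n : ℕ => (cnt P n : ℝ) / n) atTop (𝓝 c)

lemma hasFreq_iff (m : ℕ) (v : List ℕ) (c : ℝ) :
    HasFreq m v c ↔ Dens (fun i => wordAt i m = v) c := by
  unfold HasFreq Dens cnt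
  have : ∀ n : ℕ, ((Finset.Icc 1 n).filter (fun i => wordAt i m = v)).card =
      (@Finset.filter ℕ (fun i => wordAt i m = v) (fun _ => Classical.propDecidable _)
        (Finset.Icc 1 n)).card := by
    intro n; congr
  simp only [this]

lemma cnt_congr {P Q : ℕ → Prop} (h : ∀ i, 1 ≤ i → (P i ↔ Q i)) (n : ℕ) : cnt P n = cnt Q n := by
  classical
  unfold cnt
  congr 1
  apply Finset.filter_congr
  intro i hi
  exact h i (Finset.mem_Icc.1 hi).1

lemma Dens.congr {P Q : ℕ → Prop} (h : ∀ i, 1 ≤ i → (P i ↔ Q i)) (c : ℝ) :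
    Dens P c ↔ Dens Q c := by
  unfold Dens
  simp only [cnt_congr h]

lemma Dens.unique {P : ℕ → Prop} {c d : ℝ} (h : Dens P c) (h' : Dens P d) : c = d :=
  tendsto_nhds_unique h h'

lemma cnt_even (P : ℕ → Prop) (n : ℕ) :
    cnt (fun i => i % 2 = 0 ∧ P (i / 2)) n = cnt P ((n + 0) / 2) := by
  classical
  unfold cnt
  symm
  apply Finset.card_bij (fun j _ => 2 * j)
  · intro j hj
    simp only [Finset.mem_filter, Finset.mem_Icc] at hj ⊢
    refine ⟨by omega, by omega, ?_⟩
    rw [show 2 * j / 2 = j by omega]; exact hj.2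
  · intro a _ b _ h; omega
  · intro i hi
    simp only [Finset.mem_filter, Finset.mem_Icc] at hi
    refine ⟨i / 2, ?_, by omega⟩
    simp only [Finset.mem_filter, Finset.mem_Icc]
    exact ⟨by omega, hi.2.2⟩

lemma cnt_odd (P : ℕ → Prop) (n : ℕ) :
    cnt (fun i => i % 2 = 1 ∧ P ((i + 1) / 2)) n = cnt P ((n + 1) / 2) := by
  classical
  unfold cnt
  symm
  apply Finset.card_bij (fun j _ => 2 * j - 1)
  · intro j hj
    simp only [Finset.mem_filter, Finset.mem_Icc] at hj ⊢
    refine ⟨by omega, by omega, ?_⟩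
    rw [show (2 * j - 1 + 1) / 2 = j by omega]; exact hj.2
  · intro a ha b hb h
    simp only [Finset.mem_filter, Finset.mem_Icc] at ha hb
    omega
  · intro i hi
    simp only [Finset.mem_filter, Finset.mem_Icc] at hi
    refine ⟨(i + 1) / 2, ?_, by omega⟩
    simp only [Finset.mem_filter, Finset.mem_Icc]
    exact ⟨by omega, hi.2.2⟩

lemma tendsto_half (a : ℕ) (ha : a ≤ 1) :
    Tendsto (fun n : ℕ => (((n + a) / 2 : ℕ) : ℝ) / n) atTop (𝓝 (1 / 2)) := by
  have h0 : Tendsto (fun n : ℕ => (1 : ℝ) / n) atTop (𝓝 0) := tendsto_one_div_atTop_nhds_zero_nat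
  have h1 : Tendsto (fun n : ℕ => (1 / 2 : ℝ) - 1 / n) atTop (𝓝 (1 / 2)) := by
    simpa using h0.const_sub (1 / 2 : ℝ)
  have h2 : Tendsto (fun n : ℕ => (1 / 2 : ℝ) + 1 / n) atTop (𝓝 (1 / 2)) := by
    simpa using h0.const_add (1 / 2 : ℝ)
  refine tendsto_of_tendsto_of_tendsto_of_le_of_le' h1 h2 ?_ ?_
  · filter_upwards [eventually_gt_atTop 0] with n hn
    have hn' : (0 : ℝ) < n := by exact_mod_cast hn
    have : (n : ℝ) ≤ 2 * ((n + a) / 2 : ℕ) + 2 := by exact_mod_cast (by omega)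
    rw [le_div_iff₀ hn']
    field_simp
    linarith
  · filter_upwards [eventually_gt_atTop 0] with n hn
    have hn' : (0 : ℝ) < n := by exact_mod_cast hn
    have : (2 : ℝ) * ((n + a) / 2 : ℕ) ≤ n + 2 := by exact_mod_cast (by omega)
    rw [div_le_iff₀ hn']
    field_simp
    linarith

/-- Spreading a set of positions over one parity class halves its density. -/
lemma dens_half (P Q : ℕ → Prop) (a : ℕ) (ha : a ≤ 1) (h : ∀ n, cnt Q n = cnt P ((n + a) / 2))
    (c : ℝ) : Dens Q (c / 2) ↔ Dens P c := by
  unfold Dens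
  constructor
  · intro H
    have h2 : Tendsto (fun n : ℕ => 2 * n) atTop atTop :=
      tendsto_id.const_mul_atTop' (by norm_num)
    have := (H.comp h2).const_mul 2
    rw [show 2 * (c / 2) = c by ring] at this
    refine this.congr fun n => ?_
    simp only [Function.comp, h]
    rw [show (2 * n + a) / 2 = n by omega]
    push_cast
    rw [mul_comm (2 : ℝ) (n : ℝ), ← div_div]
    ring
  · intro H
    have h2 : Tendsto (fun n : ℕ => (n + a) / 2) atTop atTop := by
      refine tendsto_atTop_atTop.2 fun b => ⟨2 * b, fun n hn => by omega⟩
    have := (H.comp h2).mul (tendsto_half a ha)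
    rw [show c * (1 / 2) = c / 2 by ring] at this
    refine this.congr' ?_
    filter_upwards [eventually_gt_atTop 1] with n hn
    simp only [Function.comp, h]
    have : (((n + a) / 2 : ℕ) : ℝ) ≠ 0 := by
      have : (n + a) / 2 ≠ 0 := by omega
      exact_mod_cast this
    field_simp

lemma dens_even (P : ℕ → Prop) (c : ℝ) :
    Dens (fun i => i % 2 = 0 ∧ P (i / 2)) (c / 2) ↔ Dens P c :=
  dens_half _ _ 0 (by norm_num) (cnt_even P) c

lemma dens_odd (P : ℕ → Prop) (c : ℝ) :
    Dens (fun i => i % 2 = 1 ∧ P ((i + 1) / 2)) (c / 2) ↔ Dens P c :=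
  dens_half _ _ 1 le_rfl (cnt_odd P) c

lemma cnt_not (P : ℕ → Prop) (n : ℕ) : cnt P n + cnt (fun i => ¬ P i) n = n := by
  classical
  unfold cnt
  have := Finset.card_filter_add_card_filter_not (s := Finset.Icc 1 n) P
  simp only [Nat.card_Icc, Nat.add_sub_cancel] at this
  convert this

lemma Dens.compl {P : ℕ → Prop} {c : ℝ} (h : Dens P c) : Dens (fun i => ¬ P i) (1 - c) := by
  unfold Dens at *
  refine (h.const_sub 1).congr' ?_
  filter_upwards [eventually_gt_atTop 0] with n hn
  have h1 : (cnt P n : ℝ) + cnt (fun i => ¬ P i) n = n := by exact_mod_cast cnt_not P n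
  have : (n : ℝ) ≠ 0 := by positivity
  field_simp
  linarith

lemma Dens.or {P Q : ℕ → Prop} {c d : ℝ} (h : Dens P c) (h' : Dens Q d)
    (hd : ∀ i, P i → ¬ Q i) : Dens (fun i => P i ∨ Q i) (c + d) := by
  classical
  unfold Dens at *
  refine (h.add h').congr fun n => ?_
  have : cnt (fun i => P i ∨ Q i) n = cnt P n + cnt Q n := by
    unfold cnt
    rw [← Finset.card_union_of_disjoint]
    · congr 1
      ext i
      simp only [Finset.mem_filter, Finset.mem_union]
      tauto
    · rw [Finset.disjoint_filter]
      exact fun i _ => hd i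
  rw [this]
  push_cast
  ring

/-! ### The recursion for the number of words of given frequency -/

/-- The allowed `m`-words of frequency `c`. -/
def freqSet (c : ℝ) (m : ℕ) : Set (List ℕ) := {u | Allowed m u ∧ HasFreq m u c}

lemma hasFreq_even (j L : ℕ) (hL : 3 ≤ L) (hj : 1 ≤ j) (c : ℝ) :
    HasFreq L (wordAt (2 * j) L) (c / 2) ↔
      HasFreq ((L + 1) / 2) (wordAt j ((L + 1) / 2)) c := by
  rw [hasFreq_iff, hasFreq_iff, 
    ← dens_even (fun i => wordAt i ((L + 1) / 2) = wordAt j ((L + 1) / 2)) c]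
  apply Dens.congr
  intro i hi
  rcases Nat.mod_two_eq_zero_or_one i with h | h
  · obtain ⟨t, rfl⟩ : ∃ t, i = 2 * t := ⟨i / 2, by omega⟩
    rw [wordAt_even_inj t j L (by omega) hj, show 2 * t / 2 = t by omega]
    simp
  · obtain ⟨t, ht, rfl⟩ : ∃ t, 1 ≤ t ∧ i = 2 * t - 1 := ⟨(i + 1) / 2, by omega, by omega⟩
    have := wordAt_even_ne_odd j t L hL hj ht
    constructor
    · intro h'; exact absurd h'.symm this
    · intro h'; omega

lemma hasFreq_odd (j L : ℕ) (hL : 3 ≤ L) (hj : 1 ≤ j) (c : ℝ) :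
    HasFreq L (wordAt (2 * j - 1) L) (c / 2) ↔ HasFreq (L / 2) (wordAt j (L / 2)) c := by
  rw [hasFreq_iff, hasFreq_iff, ← dens_odd (fun i => wordAt i (L / 2) = wordAt j (L / 2)) c]
  apply Dens.congr
  intro i hi
  rcases Nat.mod_two_eq_zero_or_one i with h | h
  · obtain ⟨t, rfl⟩ : ∃ t, i = 2 * t := ⟨i / 2, by omega⟩
    have := wordAt_even_ne_odd t j L hL (by omega) hj
    constructor
    · intro h'; exact absurd h' this
    · intro h'; omega
  · obtain ⟨t, ht, rfl⟩ : ∃ t, 1 ≤ t ∧ i = 2 * t - 1 := ⟨(i + 1) / 2, by omega, by omega⟩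
    rw [wordAt_odd_inj t j L ht hj, show (2 * t - 1 + 1) / 2 = t by omega]
    simp [h]

lemma freqSet_half (c : ℝ) (L : ℕ) (hL : 3 ≤ L) :
    freqSet (c / 2) L =
      blowEven L '' freqSet c ((L + 1) / 2) ∪ blowOdd L '' freqSet c (L / 2) := by
  ext u
  constructor
  · rintro ⟨⟨i, hi, rfl⟩, hf⟩
    rcases Nat.mod_two_eq_zero_or_one i with h | h
    · obtain ⟨t, rfl⟩ : ∃ t, i = 2 * t := ⟨i / 2, by omega⟩
      have ht : 1 ≤ t := by omega
      rw [hasFreq_even t L hL ht] at hf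
      exact Or.inl ⟨_, ⟨⟨t, ht, rfl⟩, hf⟩, (wordAt_even t L ht).symm⟩
    · obtain ⟨t, ht, rfl⟩ : ∃ t, 1 ≤ t ∧ i = 2 * t - 1 := ⟨(i + 1) / 2, by omega, by omega⟩
      rw [hasFreq_odd t L hL ht] at hf
      exact Or.inr ⟨_, ⟨⟨t, ht, rfl⟩, hf⟩, (wordAt_odd t L ht).symm⟩
  · rintro (⟨_, ⟨⟨t, ht, rfl⟩, hf⟩, rfl⟩ | ⟨_, ⟨⟨t, ht, rfl⟩, hf⟩, rfl⟩)
    · rw [← wordAt_even t L ht]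
      exact ⟨⟨2 * t, by omega, rfl⟩, (hasFreq_even t L hL ht c).2 hf⟩
    · rw [← wordAt_odd t L ht]
      exact ⟨⟨2 * t - 1, by omega, rfl⟩, (hasFreq_odd t L hL ht c).2 hf⟩

lemma encard_freqSet_half (c : ℝ) (L : ℕ) (hL : 3 ≤ L) :
    (freqSet (c / 2) L).encard =
      (freqSet c ((L + 1) / 2)).encard + (freqSet c (L / 2)).encard := by
  rw [freqSet_half c L hL, Set.encard_union_eq, Set.InjOn.encard_image, Set.InjOn.encard_image]
  · rintro _ ⟨⟨i, hi, rfl⟩, _⟩ _ ⟨⟨j, hj, rfl⟩, _⟩ h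
    rwa [← wordAt_odd i L hi, ← wordAt_odd j L hj, wordAt_odd_inj i j L hi hj] at h
  · rintro _ ⟨⟨i, hi, rfl⟩, _⟩ _ ⟨⟨j, hj, rfl⟩, _⟩ h
    rwa [← wordAt_even i L hi, ← wordAt_even j L hj, wordAt_even_inj i j L hi hj] at h
  · rw [Set.disjoint_left]
    rintro _ ⟨_, ⟨⟨i, hi, rfl⟩, _⟩, rfl⟩ ⟨_, ⟨⟨j, hj, rfl⟩, _⟩, h⟩
    rw [← wordAt_even i L hi, ← wordAt_odd j L hj] at h
    exact wordAt_even_ne_odd i j L hL hi hj h.symm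

/-! ### Words of length one and two -/

lemma pd_eq_one_iff (i : ℕ) (hi : 1 ≤ i) : pd i = 1 ↔ i % 2 = 0 ∧ ¬ pd (i / 2) = 1 := by
  rcases Nat.even_or_odd' i with ⟨t, rfl | rfl⟩
  · rw [pd_even t (by omega), show 2 * t / 2 = t by omega]
    have := pd_le_one t
    omega
  · rw [pd_odd]
    omega

lemma cnt_one (n : ℕ) : cnt (fun i => pd i = 1) n + cnt (fun i => pd i = 1) (n / 2) = n / 2 := by
  rw [cnt_congr pd_eq_one_iff n, cnt_even (fun j => ¬ pd j = 1) n, add_comm]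
  exact cnt_not (fun i => pd i = 1) (n / 2)

lemma cnt_one_error (n : ℕ) :
    |3 * (cnt (fun i => pd i = 1) n : ℤ) - n| ≤ Nat.log 2 n + 1 := by
  induction n using Nat.strong_induction_on with
  | _ n ih =>
    have h := cnt_one n
    rcases Nat.lt_or_ge n 2 with hn | hn
    · have : n / 2 = 0 := by omega
      rw [this] at h
      rw [abs_le]
      omega
    · have h2 := ih (n / 2) (by omega)
      have h3 : Nat.log 2 n = Nat.log 2 (n / 2) + 1 := by
        rw [Nat.log_of_one_lt_of_le (by norm_num) hn]
      rw [h3]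
      rw [abs_le] at *
      push_cast at *
      omega

lemma dens_one : Dens (fun i => pd i = 1) (1 / 3) := by
  unfold Dens
  have hlog : Tendsto (fun n : ℕ => ((Nat.log 2 n : ℝ) + 1) / (3 * n)) atTop (𝓝 0) := by
    have h1 : Tendsto (fun x : ℝ => Real.log x / x) atTop (𝓝 0) :=
      Real.isLittleO_log_id_atTop.tendsto_div_nhds_zero
    have h2 := h1.comp (tendsto_natCast_atTop_atTop (R := ℝ))
    have h3 : Tendsto (fun n : ℕ => (1 : ℝ) / n) atTop (𝓝 0) :=
      tendsto_one_div_atTop_nhds_zero_nat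
    have h4 := (h2.const_mul (1 / (3 * Real.log 2))).add (h3.const_mul (1 / 3))
    simp only [mul_zero, add_zero] at h4
    refine squeeze_zero (fun n => by positivity) (fun n => ?_) h4
    have hb : (Nat.log 2 n : ℝ) ≤ Real.log n / Real.log 2 := by
      have := Real.natLog_le_logb n 2
      rw [Real.logb] at this
      exact_mod_cast this
    have hl : 0 < Real.log 2 := Real.log_pos (by norm_num)
    calc ((Nat.log 2 n : ℝ) + 1) / (3 * n) ≤ (Real.log n / Real.log 2 + 1) / (3 * n) := by gcongr
      _ = _ := by
        simp only [Function.comp]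
        rcases Nat.eq_zero_or_pos n with rfl | hn
        · simp
        · have : (n : ℝ) ≠ 0 := by positivity
          field_simp
  rw [tendsto_iff_dist_tendsto_zero]
  refine squeeze_zero' (Eventually.of_forall fun n => dist_nonneg) ?_ hlog
  filter_upwards [eventually_gt_atTop 0] with n hn
  have hn' : (0 : ℝ) < n := by exact_mod_cast hn
  have h : |3 * (cnt (fun i => pd i = 1) n : ℝ) - n| ≤ Nat.log 2 n + 1 := by
    exact_mod_cast cnt_one_error n
  rw [Real.dist_eq, show (cnt (fun i => pd i = 1) n : ℝ) / n - 1 / 3 =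
    (3 * (cnt (fun i => pd i = 1) n : ℝ) - n) / (3 * n) by field_simp, abs_div,
    abs_of_pos (show (0 : ℝ) < 3 * n by positivity)]
  gcongr

lemma dens_zero : Dens (fun i => pd i = 0) (2 / 3) := by
  have h := dens_one.compl
  rw [show (1 : ℝ) - 1 / 3 = 2 / 3 by norm_num] at h
  refine (Dens.congr (fun i _ => ?_) _).1 h
  have := pd_le_one i
  omega

lemma wordAt_one (i : ℕ) : wordAt i 1 = [pd i] := by simp [wordAt]

lemma wordAt_two (i : ℕ) : wordAt i 2 = [pd i, pd (i + 1)] := by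
  simp [wordAt, List.range_succ]

lemma encard_freqSet_zero_one : (freqSet (2 / 3) 1).encard = 1 := by
  rw [Set.encard_eq_one]
  refine ⟨[0], ?_⟩
  ext u
  constructor
  · rintro ⟨⟨i, hi, rfl⟩, hf⟩
    rw [hasFreq_iff] at hf
    simp only [wordAt_one, List.cons.injEq, and_true] at hf ⊢
    have := pd_le_one i
    interval_cases h : pd i
    · simp
    · have := hf.unique dens_one
      norm_num at this
  · rintro rfl
    refine ⟨⟨1, le_rfl, by rw [wordAt_one]; simp [pd]⟩, ?_⟩
    rw [hasFreq_iff]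
    simpa only [wordAt_one, List.cons.injEq, and_true] using dens_zero

lemma dens_pair_iff (a b : ℕ) (c : ℝ) :
    HasFreq 2 [a, b] c ↔ Dens (fun i => pd i = a ∧ pd (i + 1) = b) c := by
  rw [hasFreq_iff]
  simp only [wordAt_two, List.cons.injEq, and_true]

lemma dens_one_zero : Dens (fun i => pd i = 1 ∧ pd (i + 1) = 0) (1 / 3) := by
  refine (Dens.congr (fun i hi => ?_) _).1 dens_one
  rcases Nat.even_or_odd' i with ⟨t, rfl | rfl⟩ <;> simp [pd_odd]

lemma dens_zero_one : Dens (fun i => pd i = 0 ∧ pd (i + 1) = 1) (1 / 3) := by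
  have h := (dens_odd (fun i => pd i = 0) (2 / 3)).2 dens_zero
  rw [show (2 / 3 / 2 : ℝ) = 1 / 3 by norm_num] at h
  refine (Dens.congr (fun i hi => ?_) _).1 h
  rcases Nat.even_or_odd' i with ⟨t, rfl | rfl⟩
  · simp [pd_odd]
  · rw [show 2 * t + 1 + 1 = 2 * (t + 1) by ring, pd_even _ (by omega), pd_odd,
      show 2 * (t + 1) / 2 = t + 1 by omega]
    have := pd_le_one (t + 1)
    omega

lemma pd_not_one_one (i : ℕ) : ¬ (pd i = 1 ∧ pd (i + 1) = 1) := by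
  rcases Nat.even_or_odd' i with ⟨t, rfl | rfl⟩ <;> simp [pd_odd]

lemma dens_zero_zero : Dens (fun i => pd i = 0 ∧ pd (i + 1) = 0) (1 / 3) := by
  have h := (dens_one_zero.or dens_zero_one (fun i h h' => by omega)).compl
  rw [show (1 - (1 / 3 + 1 / 3) : ℝ) = 1 / 3 by norm_num] at h
  refine (Dens.congr (fun i hi => ?_) _).1 h
  have := pd_le_one i
  have := pd_le_one (i + 1)
  have := pd_not_one_one i
  omega

lemma allowed_two (u : List ℕ) : Allowed 2 u ↔ u = [0, 0] ∨ u = [0, 1] ∨ u = [1, 0] := by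
  constructor
  · rintro ⟨i, hi, rfl⟩
    rw [wordAt_two]
    have := pd_le_one i
    have := pd_le_one (i + 1)
    have := pd_not_one_one i
    simp only [List.cons.injEq, and_true]
    omega
  · have h1 : pd 1 = 0 := pd_odd 0
    have h2 : pd 2 = 1 := by rw [pd_even 1 le_rfl, h1]
    have h3 : pd 3 = 0 := pd_odd 1
    have h4 : pd 4 = 0 := by rw [pd_even 2 (by norm_num), h2]
    rintro (rfl | rfl | rfl)
    · exact ⟨3, by norm_num, by rw [wordAt_two, h3, h4]⟩
    · exact ⟨1, by norm_num, by rw [wordAt_two, h1, h2]⟩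
    · exact ⟨2, by norm_num, by rw [wordAt_two, h2, h3]⟩

lemma hasFreq_two (u : List ℕ) (h : Allowed 2 u) : HasFreq 2 u (1 / 3) := by
  rcases (allowed_two u).1 h with rfl | rfl | rfl <;> rw [dens_pair_iff]
  exacts [dens_zero_zero, dens_zero_one, dens_one_zero]

lemma encard_freqSet_zero_two : (freqSet (2 / 3) 2).encard = 0 := by
  rw [Set.encard_eq_zero, Set.eq_empty_iff_forall_notMem]
  rintro u ⟨ha, hf⟩
  have := tendsto_nhds_unique hf (hasFreq_two u ha)
  norm_num at this

lemma encard_freqSet_one_two : (freqSet (1 / 3) 2).encard = 3 := by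
  rw [Set.encard_eq_three]
  refine ⟨[0, 0], [0, 1], [1, 0], by simp, by simp, by simp, ?_⟩
  ext u
  simp only [Set.mem_insert_iff, Set.mem_singleton_iff, ← allowed_two]
  exact ⟨fun h => h.1, fun h => ⟨h, hasFreq_two u h⟩⟩

/-! ### Solving the recursion -/

/-- The closed form for `k ≥ 1`, written with `k + 1` for `k`; the piecewise linear function is a
maximum of its two branches, and the endpoint `q = 2 ^ (k + 1)` is included. -/
lemma encard_freqSet_succ (k : ℕ) : ∀ q ≤ 2 ^ (k + 1),
    (freqSet (2 / 3 / 2 ^ (k + 1)) (2 ^ (k + 1) + q)).encard =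
      ((max (3 * 2 ^ k - 2 * q) (2 ^ (k + 1) - q) : ℕ) : ℕ∞) := by
  induction k with
  | zero =>
    intro q hq
    norm_num at hq ⊢
    have hc : (1 / 3 : ℝ) = 2 / 3 / 2 := by norm_num
    interval_cases q
    · simpa using encard_freqSet_one_two
    · rw [hc, encard_freqSet_half _ _ (by norm_num)]
      norm_num [encard_freqSet_zero_two, encard_freqSet_zero_one]
    · rw [hc, encard_freqSet_half _ _ (by norm_num)]
      norm_num [encard_freqSet_zero_two]
  | succ k ih =>
    intro q hq
    have hp : 1 ≤ 2 ^ k := Nat.one_le_two_pow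
    have hp1 : 2 ^ (k + 1) = 2 * 2 ^ k := by ring
    have hp2 : 2 ^ (k + 1 + 1) = 4 * 2 ^ k := by ring
    have e1 : (2 ^ (k + 1 + 1) + q + 1) / 2 = 2 ^ (k + 1) + (q + 1) / 2 := by omega
    have e2 : (2 ^ (k + 1 + 1) + q) / 2 = 2 ^ (k + 1) + q / 2 := by omega
    rw [pow_succ (2 : ℝ) (k + 1), ← div_div, encard_freqSet_half _ _ (by omega), e1, e2,
      ih _ (by omega), ih _ (by omega), ← Nat.cast_add]
    congr 1
    omega

theorem pd_count_high_freq_words (m k q : ℕ) (hm : m = 2 ^ k + q) (hq : q < 2 ^ k) :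
    (k = 0 → {u | Allowed m u ∧ HasFreq m u (2 / (3 * 2 ^ k : ℝ))}.ncard = 1) ∧
    (1 ≤ k → q < 2 ^ (k - 1) →
      {u | Allowed m u ∧ HasFreq m u (2 / (3 * 2 ^ k : ℝ))}.ncard = 3 * 2 ^ (k - 1) - 2 * q) ∧
    (1 ≤ k → 2 ^ (k - 1) ≤ q →
      {u | Allowed m u ∧ HasFreq m u (2 / (3 * 2 ^ k : ℝ))}.ncard = 2 ^ k - q) := by
  rw [← div_div]
  change (k = 0 → (freqSet (2 / 3 / 2 ^ k) m).ncard = 1) ∧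
    (1 ≤ k → q < 2 ^ (k - 1) → (freqSet (2 / 3 / 2 ^ k) m).ncard = 3 * 2 ^ (k - 1) - 2 * q) ∧
    (1 ≤ k → 2 ^ (k - 1) ≤ q → (freqSet (2 / 3 / 2 ^ k) m).ncard = 2 ^ k - q)
  subst hm
  rcases k with _ | k
  · have : q = 0 := by simpa using hq
    subst this
    simp [Set.ncard, encard_freqSet_zero_one]
  · have h := encard_freqSet_succ k q hq.le
    have h' : (freqSet (2 / 3 / 2 ^ (k + 1)) (2 ^ (k + 1) + q)).ncard =
        max (3 * 2 ^ k - 2 * q) (2 ^ (k + 1) - q) := by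
      rw [Set.ncard, h, ENat.toNat_natCast]
    have hp1 : 2 ^ (k + 1) = 2 * 2 ^ k := by ring
    simp only [h', Nat.add_sub_cancel]
    omega
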